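/- Let 𝔑₁, 𝔑₂ be properly infinite von Neumann algebras on a Hilbert space H with 𝔑₁ ⊆ 𝔑₂′ and X₁X₂ ≠ 0 for all nonzero X₁ ∈ 𝔑₁, X₂ ∈ 𝔑₂ (Schlieder property). Then for every unit vector Ψ ∈ H and every ε > 0 there exists a unit vector Ψ′ with ‖Ψ - Ψ′‖ < ε such that the vector state of 𝔑₁ ∨ 𝔑₂ induced by Ψ′ is an EPR state for incommensurable pairs, i.e., there are projections E₁, F₁ ∈ 𝔑₁, E₂, F₂ ∈ 𝔑₂ with ω((E₁-E₂)²) = ω((F₁-F₂)²) = 0, ω(|[E₁,F₁]|²) ≠ 0, ω(|[E₂,F₂]|²) ≠ 0, where ω(X) = ⟨Ψ′, XΨ′⟩. -/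

import Mathlib

/-!
The vector states that are EPR states for incommensurable pairs form a dense set because such a
state can be produced by an arbitrarily small perturbation far out in the algebras. Let `v ∈ 𝔑₁`
and `w ∈ 𝔑₂` be partial isometries with `v² = w² = 0`, both supported on a subspace where `Ψ` is
almost zero, and cut `Ψ` down to a vector `Φ` killed by `v`, `v*`, `w`, `w*`. If `ξ ≠ 0` lies in
the range of `v*v w*w`, which is nonzero by the Schlieder property, then `χ = ξ + v w ξ` is a
maximally entangled state of two qubits. The operators `v*v` and `w*w` agree on `Φ + t χ`, and so
do `v + v*` and `w + w*`, hence also their spectral projections, while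
`(v* - v) (Φ + t χ) = t (w ξ - v ξ) ≠ 0`.
-/

open Filter Topology

section StarRing

/-- A partial isometry whose initial projection `star v * v` and final projection `v * star v` are
orthogonal: the off-diagonal unit of a system of `2 × 2` matrix units. -/
structure IsSquareZeroPartialIsometry {A : Type*} [NonUnitalRing A] [Star A] (v : A) : Prop where
  mul_star_mul_self : v * star v * v = v
  mul_self : v * v = 0

/-- The sum of the initial and the final projection of a square-zero partial isometry `v`, i.e. the
unit of the `2 × 2` matrix algebra that `v` generates. -/
def supportProjection {A : Type*} [NonUnitalRing A] [Star A] (v : A) : A :=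
  star v * v + v * star v

/-- The projection onto the eigenspace for the eigenvalue `1` of a self-adjoint element `s` with
`s³ = s`. -/
def unitEigenprojection (𝕜 : Type*) {A : Type*} [Field 𝕜] [NonUnitalRing A] [Module 𝕜 A] (s : A) :
    A :=
  (2⁻¹ : 𝕜) • (s * s + s)

variable {A : Type*} [NonUnitalRing A] [StarRing A]

theorem isStarProjection_unitEigenprojection_of_mul_mul_self {𝕜 : Type*} [Field 𝕜] [StarRing 𝕜]
    [NeZero (2 : 𝕜)] [Module 𝕜 A] [StarModule 𝕜 A] [IsScalarTower 𝕜 A A] [SMulCommClass 𝕜 A A]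
    {s : A} (hs : IsSelfAdjoint s) (hs3 : s * s * s = s) :
    IsStarProjection (unitEigenprojection 𝕜 s) where
  isIdempotentElem := by
    have hsq : (s * s + s) * (s * s + s) = (2 : 𝕜) • (s * s + s) := by
      simp only [mul_add, add_mul, ← mul_assoc, hs3, two_smul]
      abel
    rw [IsIdempotentElem, unitEigenprojection, smul_mul_smul_comm, hsq, smul_smul, mul_assoc,
      inv_mul_cancel₀ two_ne_zero, mul_one]
  isSelfAdjoint := by
    simp [IsSelfAdjoint, unitEigenprojection, star_smul, hs.star_eq]

namespace IsSquareZeroPartialIsometry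

variable {v : A}

theorem star_mul_star_self (hv : IsSquareZeroPartialIsometry v) : star v * star v = 0 := by
  rw [← star_mul, hv.mul_self, star_zero]

theorem star_mul_mul_star (hv : IsSquareZeroPartialIsometry v) : star v * v * star v = star v := by
  simpa [mul_assoc] using congrArg star hv.mul_star_mul_self

theorem isStarProjection_star_mul_self (hv : IsSquareZeroPartialIsometry v) :
    IsStarProjection (star v * v) where
  isIdempotentElem := by rw [IsIdempotentElem, ← mul_assoc, hv.star_mul_mul_star]
  isSelfAdjoint := .star_mul_self v

theorem add_star_mul_self (hv : IsSquareZeroPartialIsometry v) :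
    (v + star v) * (v + star v) = supportProjection v := by
  simp [supportProjection, mul_add, add_mul, hv.mul_self, hv.star_mul_star_self]

theorem mul_supportProjection (hv : IsSquareZeroPartialIsometry v) :
    v * supportProjection v = v := by
  rw [supportProjection, mul_add, ← mul_assoc, ← mul_assoc, hv.mul_star_mul_self, hv.mul_self,
    zero_mul, add_zero]

theorem star_mul_supportProjection (hv : IsSquareZeroPartialIsometry v) :
    star v * supportProjection v = star v := by
  rw [supportProjection, mul_add, ← mul_assoc, ← mul_assoc, hv.star_mul_mul_star,
    hv.star_mul_star_self, zero_mul, zero_add]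

theorem isStarProjection_supportProjection (hv : IsSquareZeroPartialIsometry v) :
    IsStarProjection (supportProjection v) where
  isIdempotentElem := by
    nth_rw 1 [IsIdempotentElem, supportProjection]
    rw [add_mul, mul_assoc, mul_assoc, hv.mul_supportProjection, hv.star_mul_supportProjection,
      supportProjection]
  isSelfAdjoint := (IsSelfAdjoint.star_mul_self v).add (.mul_star_self v)

theorem isStarProjection_unitEigenprojection {𝕜 : Type*} [Field 𝕜] [StarRing 𝕜]
    [NeZero (2 : 𝕜)] [Module 𝕜 A] [StarModule 𝕜 A] [IsScalarTower 𝕜 A A] [SMulCommClass 𝕜 A A]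
    (hv : IsSquareZeroPartialIsometry v) :
    IsStarProjection (unitEigenprojection 𝕜 (v + star v)) := by
  refine isStarProjection_unitEigenprojection_of_mul_mul_self (.add_star_self v) ?_
  rw [mul_assoc, hv.add_star_mul_self, add_mul, hv.mul_supportProjection,
    hv.star_mul_supportProjection]

theorem commutator_unitEigenprojection {𝕜 : Type*} [Field 𝕜] [Module 𝕜 A] [IsScalarTower 𝕜 A A]
    [SMulCommClass 𝕜 A A] (hv : IsSquareZeroPartialIsometry v) :
    star v * v * unitEigenprojection 𝕜 (v + star v) -
      unitEigenprojection 𝕜 (v + star v) * (star v * v) = (2⁻¹ : 𝕜) • (star v - v) := by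
  have hleft : star v * v * supportProjection v = star v * v := by
    rw [mul_assoc, hv.mul_supportProjection]
  have hright : supportProjection v * (star v * v) = star v * v := by
    simpa [hv.isStarProjection_supportProjection.isSelfAdjoint.star_eq] using congrArg star hleft
  have hleft' : star v * v * (v + star v) = star v := by
    rw [mul_add, hv.star_mul_mul_star, mul_assoc, hv.mul_self, mul_zero, zero_add]
  have hright' : (v + star v) * (star v * v) = v := by
    simpa [add_comm] using congrArg star hleft'
  rw [unitEigenprojection, hv.add_star_mul_self, mul_smul_comm, smul_mul_assoc, ← smul_sub, mul_add,
    add_mul, hleft, hright, hleft', hright', add_sub_add_left_eq_sub]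

end IsSquareZeroPartialIsometry

end StarRing

section CStarRing

variable {A : Type*} [NonUnitalNormedRing A] [StarRing A] [CStarRing A] {v : A}

theorem mul_star_mul_self_of_isIdempotentElem (hp : IsIdempotentElem (star v * v)) :
    v * star v * v = v := by
  have hdefect : star (v * star v * v - v) * (v * star v * v - v) = 0 := by
    have hexpand : star (v * star v * v - v) * (v * star v * v - v) =
        star v * v * (star v * v) * (star v * v) - star v * v * (star v * v) -
          (star v * v * (star v * v) - star v * v) := by
      simp only [star_sub, star_mul, star_star, sub_mul, mul_sub, mul_assoc]
    rw [hexpand, hp.eq, hp.eq, sub_self]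
  exact sub_eq_zero.mp ((CStarRing.star_mul_self_eq_zero_iff _).mp hdefect)

theorem isSquareZeroPartialIsometry_of_mul_eq_zero (hp : IsIdempotentElem (star v * v))
    (horth : star v * v * (v * star v) = 0) : IsSquareZeroPartialIsometry v where
  mul_star_mul_self := mul_star_mul_self_of_isIdempotentElem hp
  mul_self := by
    calc v * v = v * star v * v * (v * star v * v) := by
          rw [mul_star_mul_self_of_isIdempotentElem hp]
      _ = v * (star v * v * (v * star v)) * v := by simp only [mul_assoc]
      _ = 0 := by rw [horth, mul_zero, zero_mul]

end CStarRing

section NormedSpace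

variable {𝕜 E : Type*} [RCLike 𝕜] [NormedAddCommGroup E] [NormedSpace 𝕜 E]

theorem exists_norm_eq_one_norm_sub_lt_of_mem_closure {S : Set E}
    (hS : ∀ c : 𝕜, c ≠ 0 → ∀ x ∈ S, c • x ∈ S) {x : E} (hx : ‖x‖ = 1) (hxS : x ∈ closure S)
    {ε : ℝ} (hε : 0 < ε) : ∃ y ∈ S, ‖y‖ = 1 ∧ ‖x - y‖ < ε := by
  have hx0 : x ≠ 0 := norm_ne_zero_iff.mp (by simp [hx])
  have hlim : Tendsto (fun y : E => ((‖y‖ : 𝕜)⁻¹) • y) (𝓝 x) (𝓝 x) := by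
    have hcont : ContinuousAt (fun y : E => ((‖y‖ : 𝕜)⁻¹) • y) x :=
      ((RCLike.continuous_ofReal.comp continuous_norm).continuousAt.inv₀
        (by simp [hx])).smul continuousAt_id
    simpa [ContinuousAt, hx] using hcont
  obtain ⟨y, ⟨hy0, hdist⟩, hyS⟩ := mem_closure_iff_nhds.mp hxS _
    ((eventually_ne_nhds hx0).and (hlim.eventually (Metric.ball_mem_nhds x hε)))
  refine ⟨_, hS _ (by simpa using hy0) y hyS, norm_smul_inv_norm hy0, ?_⟩
  rwa [← dist_eq_norm, dist_comm]

theorem unitEigenprojection_apply_eq {s t : E →L[𝕜] E} {x : E} (hst : Commute s t)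
    (h : s x = t x) : unitEigenprojection 𝕜 s x = unitEigenprojection 𝕜 t x := by
  have hsq : s (s x) = t (t x) := by
    calc s (s x) = s (t x) := by rw [h]
      _ = t (s x) := DFunLike.congr_fun hst.eq x
      _ = t (t x) := by rw [h]
  rw [unitEigenprojection, unitEigenprojection, smul_apply, smul_apply, add_apply, add_apply,
    mul_apply_eq_comp, mul_apply_eq_comp, hsq, h]

end NormedSpace

section Hilbert

variable {𝕜 H : Type*} [RCLike 𝕜] [NormedAddCommGroup H] [InnerProductSpace 𝕜 H] [CompleteSpace H]

theorem tendsto_one_sub_mul_one_sub_apply {ι : Type*} {l : Filter ι}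
    {p q : ι → H →L[𝕜] H} (hp : ∀ i, IsStarProjection (p i)) {x : H}
    (hpx : Tendsto (fun i => p i x) l (𝓝 0)) (hqx : Tendsto (fun i => q i x) l (𝓝 0)) :
    Tendsto (fun i => ((1 - p i) * (1 - q i)) x) l (𝓝 x) := by
  have hcut : Tendsto (fun i => (1 - p i) (q i x)) l (𝓝 0) :=
    squeeze_zero_norm (fun i => by simpa using (1 - p i).le_of_opNorm_le (hp i).one_sub.norm_le _)
      (tendsto_zero_iff_norm_tendsto_zero.mp hqx)
  have hlim := ((tendsto_const_nhds (x := x)).sub hpx).sub hcut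
  rw [sub_zero, sub_zero] at hlim
  refine hlim.congr fun i => ?_
  simp [mul_apply_eq_comp, map_sub]

/-- The vector state of `Ω` on `N₁ ∨ N₂` is an EPR state for incommensurable pairs: some
projections `E₁`, `F₁` in `N₁` are perfectly correlated with projections `E₂`, `F₂` in `N₂`, and
neither commutator `[E₁, F₁]`, `[E₂, F₂]` vanishes in the state. The vector is not required to be
normalized. -/
def IsEPRVector (N₁ N₂ : NonUnitalStarSubalgebra 𝕜 (H →L[𝕜] H)) (Ω : H) : Prop :=
  ∃ E₁ ∈ N₁, ∃ F₁ ∈ N₁, ∃ E₂ ∈ N₂, ∃ F₂ ∈ N₂,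
    (IsIdempotentElem E₁ ∧ IsSelfAdjoint E₁) ∧
    (IsIdempotentElem F₁ ∧ IsSelfAdjoint F₁) ∧
    (IsIdempotentElem E₂ ∧ IsSelfAdjoint E₂) ∧
    (IsIdempotentElem F₂ ∧ IsSelfAdjoint F₂) ∧
    inner 𝕜 Ω (((E₁ - E₂) * (E₁ - E₂)) Ω) = 0 ∧
    inner 𝕜 Ω (((F₁ - F₂) * (F₁ - F₂)) Ω) = 0 ∧
    inner 𝕜 Ω ((star (E₁ * F₁ - F₁ * E₁) * (E₁ * F₁ - F₁ * E₁)) Ω) ≠ 0 ∧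
    inner 𝕜 Ω ((star (E₂ * F₂ - F₂ * E₂) * (E₂ * F₂ - F₂ * E₂)) Ω) ≠ 0

theorem inner_star_mul_self_apply_eq_zero_iff {X : H →L[𝕜] H} {x : H} :
    inner 𝕜 x ((star X * X) x) = 0 ↔ X x = 0 := by
  rw [mul_apply_eq_comp, ContinuousLinearMap.star_eq_adjoint,
    ContinuousLinearMap.adjoint_inner_right, inner_self_eq_zero]

section Pair

variable {N₁ N₂ : NonUnitalStarSubalgebra 𝕜 (H →L[𝕜] H)}

theorem IsEPRVector.smul {Ω : H} (h : IsEPRVector N₁ N₂ Ω) {c : 𝕜} (hc : c ≠ 0) :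
    IsEPRVector N₁ N₂ (c • Ω) := by
  have hinner (T : H →L[𝕜] H) : inner 𝕜 (c • Ω) (T (c • Ω)) = 0 ↔ inner 𝕜 Ω (T Ω) = 0 := by
    simp [inner_smul_left, inner_smul_right, hc]
  simpa only [IsEPRVector, ne_eq, hinner] using h

/-- Only one commutator has to be tested: perfect correlation gives
`[E₂, F₂] Ω = -[E₁, F₁] Ω`. -/
theorem isEPRVector_of_apply_eq (hcomm : ∀ x ∈ N₁, ∀ y ∈ N₂, Commute x y)
    {E₁ F₁ E₂ F₂ : H →L[𝕜] H} {Ω : H} (hE₁ : E₁ ∈ N₁) (hF₁ : F₁ ∈ N₁) (hE₂ : E₂ ∈ N₂)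
    (hF₂ : F₂ ∈ N₂) (pE₁ : IsStarProjection E₁) (pF₁ : IsStarProjection F₁)
    (pE₂ : IsStarProjection E₂) (pF₂ : IsStarProjection F₂) (hE : E₁ Ω = E₂ Ω) (hF : F₁ Ω = F₂ Ω)
    (hne : (E₁ * F₁ - F₁ * E₁) Ω ≠ 0) : IsEPRVector N₁ N₂ Ω := by
  have hneg : (E₂ * F₂ - F₂ * E₂) Ω = -(E₁ * F₁ - F₁ * E₁) Ω := by
    have hEF : E₂ (F₁ Ω) = F₁ (E₂ Ω) := DFunLike.congr_fun (hcomm _ hF₁ _ hE₂).eq.symm Ω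
    have hFE : F₂ (E₁ Ω) = E₁ (F₂ Ω) := DFunLike.congr_fun (hcomm _ hE₁ _ hF₂).eq.symm Ω
    calc (E₂ * F₂ - F₂ * E₂) Ω = E₂ (F₁ Ω) - F₂ (E₁ Ω) := by rw [hE, hF]; rfl
      _ = F₁ (E₁ Ω) - E₁ (F₁ Ω) := by rw [hEF, hFE, hE, hF]
      _ = -(E₁ * F₁ - F₁ * E₁) Ω := (neg_sub _ _).symm
  refine ⟨E₁, hE₁, F₁, hF₁, E₂, hE₂, F₂, hF₂, ⟨pE₁.1, pE₁.2⟩, ⟨pF₁.1, pF₁.2⟩, ⟨pE₂.1, pE₂.2⟩,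
    ⟨pF₂.1, pF₂.2⟩, ?_, ?_, ?_, ?_⟩
  · simp [mul_apply_eq_comp, hE]
  · simp [mul_apply_eq_comp, hF]
  · rwa [ne_eq, inner_star_mul_self_apply_eq_zero_iff]
  · rwa [ne_eq, inner_star_mul_self_apply_eq_zero_iff, hneg, neg_eq_zero]

theorem unitEigenprojection_mem {s : H →L[𝕜] H} (hs : s ∈ N₁) : unitEigenprojection 𝕜 s ∈ N₁ :=
  SMulMemClass.smul_mem _ (add_mem (mul_mem hs hs) hs)

namespace IsSquareZeroPartialIsometry

variable {v w : H →L[𝕜] H}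

theorem star_apply_eq_zero (hv : IsSquareZeroPartialIsometry v) {ξ : H} (hξ : star v (v ξ) = ξ) :
    star v ξ = 0 := by
  rw [← hξ]
  exact DFunLike.congr_fun hv.star_mul_star_self _

theorem apply_entangled (hv : IsSquareZeroPartialIsometry v) (hvw : Commute v w)
    (hsvw : Commute (star v) w) {ξ : H} (hξ : star v (v ξ) = ξ) :
    v (ξ + v (w ξ)) = v ξ ∧ star v (ξ + v (w ξ)) = w ξ := by
  have hvv (x : H) : v (v x) = 0 := DFunLike.congr_fun hv.mul_self x
  have hsξ : star v ξ = 0 := hv.star_apply_eq_zero hξ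
  have hsvwξ : star v (v (w ξ)) = w ξ := by
    calc star v (v (w ξ)) = star v (w (v ξ)) := congrArg _ (DFunLike.congr_fun hvw.eq ξ)
      _ = w (star v (v ξ)) := DFunLike.congr_fun hsvw.eq _
      _ = w ξ := by rw [hξ]
  simp [hvv, hsξ, hsvwξ]

theorem apply_ne_apply (hv : IsSquareZeroPartialIsometry v) (hsvw : Commute (star v) w) {ξ : H}
    (hξ : star v (v ξ) = ξ) (hξ0 : ξ ≠ 0) : v ξ ≠ w ξ := by
  intro heq
  have hsξ : star v ξ = 0 := hv.star_apply_eq_zero hξ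
  apply hξ0
  calc ξ = star v (w ξ) := by rw [← heq, hξ]
    _ = w (star v ξ) := DFunLike.congr_fun hsvw.eq ξ
    _ = 0 := by rw [hsξ, map_zero]

theorem exists_entangled (hv : IsSquareZeroPartialIsometry v) (hw : IsSquareZeroPartialIsometry w)
    (hvw : Commute v w) (hsvw : Commute (star v) w) (hne : star v * v * (star w * w) ≠ 0) :
    ∃ χ : H, (star v * v) χ = (star w * w) χ ∧ (v + star v) χ = (w + star w) χ ∧
      v χ ≠ star v χ := by
  obtain ⟨u, hu⟩ := DFunLike.ne_iff.mp hne
  set ξ := (star v * v * (star w * w)) u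
  have hvξ : star v (v ξ) = ξ := by
    refine DFunLike.congr_fun (f := star v * v * (star v * v * (star w * w))) ?_ u
    rw [← mul_assoc, hv.isStarProjection_star_mul_self.isIdempotentElem]
  have hsvsw : Commute (star v) (star w) := hvw.star_star
  have hvsw : Commute v (star w) := by simpa using hsvw.star_star
  have hwξ : star w (w ξ) = ξ := by
    refine DFunLike.congr_fun (f := star w * w * (star v * v * (star w * w))) ?_ u
    have hcomm : Commute (star v * v) (star w * w) :=
      (hsvsw.mul_left hvsw).mul_right (hsvw.mul_left hvw)
    rw [hcomm.eq, ← mul_assoc, hw.isStarProjection_star_mul_self.isIdempotentElem]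
  obtain ⟨hvχ, hsvχ⟩ := hv.apply_entangled hvw hsvw hvξ
  obtain ⟨hwχ, hswχ⟩ := hw.apply_entangled hvw.symm hvsw.symm hwξ
  have hswap : w (v ξ) = v (w ξ) := DFunLike.congr_fun hvw.eq.symm ξ
  rw [hswap] at hwχ hswχ
  refine ⟨ξ + v (w ξ), ?_, ?_, ?_⟩
  · rw [mul_apply_eq_comp, mul_apply_eq_comp, hvχ, hwχ, hvξ, hwξ]
  · rw [add_apply, add_apply, hvχ, hsvχ, hwχ, hswχ, add_comm]
  · rw [hvχ, hsvχ]
    exact hv.apply_ne_apply hsvw hvξ hu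

theorem isEPRVector (hcomm : ∀ x ∈ N₁, ∀ y ∈ N₂, Commute x y)
    (hv : IsSquareZeroPartialIsometry v) (hw : IsSquareZeroPartialIsometry w) (hvN : v ∈ N₁)
    (hwN : w ∈ N₂) {Ω : H} (hE : (star v * v) Ω = (star w * w) Ω)
    (hs : (v + star v) Ω = (w + star w) Ω) (hne : v Ω ≠ star v Ω) : IsEPRVector N₁ N₂ Ω := by
  have hsv : v + star v ∈ N₁ := add_mem hvN (star_mem hvN)
  have hsw : w + star w ∈ N₂ := add_mem hwN (star_mem hwN)
  refine isEPRVector_of_apply_eq hcomm (mul_mem (star_mem hvN) hvN) (unitEigenprojection_mem hsv)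
    (mul_mem (star_mem hwN) hwN) (unitEigenprojection_mem hsw) hv.isStarProjection_star_mul_self
    hv.isStarProjection_unitEigenprojection hw.isStarProjection_star_mul_self
    hw.isStarProjection_unitEigenprojection hE
    (unitEigenprojection_apply_eq (hcomm _ hsv _ hsw) hs) ?_
  rw [hv.commutator_unitEigenprojection, smul_apply, sub_apply]
  exact smul_ne_zero (inv_ne_zero two_ne_zero) (sub_ne_zero.mpr hne.symm)

theorem apply_one_sub_supportProjection (hv : IsSquareZeroPartialIsometry v) (x : H) :
    v ((1 - supportProjection v) x) = 0 ∧ star v ((1 - supportProjection v) x) = 0 := by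
  simp only [← mul_apply_eq_comp, mul_sub, mul_one, hv.mul_supportProjection,
    hv.star_mul_supportProjection, sub_self, zero_apply, and_self]

theorem mem_closure_isEPRVector (hcomm : ∀ x ∈ N₁, ∀ y ∈ N₂, Commute x y)
    (hv : IsSquareZeroPartialIsometry v) (hw : IsSquareZeroPartialIsometry w) (hvN : v ∈ N₁)
    (hwN : w ∈ N₂) (hne : star v * v * (star w * w) ≠ 0) (x : H) :
    ((1 - supportProjection v) * (1 - supportProjection w)) x ∈
      closure {Ω | IsEPRVector N₁ N₂ Ω} := by
  obtain ⟨χ, hE, hs, hχ⟩ :=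
    hv.exists_entangled hw (hcomm _ hvN _ hwN) (hcomm _ (star_mem hvN) _ hwN) hne
  set Φ := ((1 - supportProjection v) * (1 - supportProjection w)) x with hΦ
  obtain ⟨hvΦ, hsvΦ⟩ : v Φ = 0 ∧ star v Φ = 0 := hv.apply_one_sub_supportProjection _
  obtain ⟨hwΦ, hswΦ⟩ : w Φ = 0 ∧ star w Φ = 0 := by
    have hsupp : Commute (supportProjection v) (supportProjection w) :=
      hcomm _ (add_mem (mul_mem (star_mem hvN) hvN) (mul_mem hvN (star_mem hvN))) _
        (add_mem (mul_mem (star_mem hwN) hwN) (mul_mem hwN (star_mem hwN)))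
    have hswap : Commute (1 - supportProjection v) (1 - supportProjection w) :=
      .sub_right (.one_right _) (.sub_left (.one_left _) hsupp)
    rw [hΦ, hswap.eq]
    exact hw.apply_one_sub_supportProjection _
  have hlim : Tendsto (fun t : 𝕜 => Φ + t • χ) (𝓝[≠] 0) (𝓝 Φ) := by
    have hcont : Continuous fun t : 𝕜 => Φ + t • χ := by fun_prop
    simpa using (hcont.tendsto 0).mono_left nhdsWithin_le_nhds
  refine mem_closure_of_tendsto hlim ?_
  filter_upwards [self_mem_nhdsWithin] with t ht
  simp only [mul_apply_eq_comp, add_apply] at hE hs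
  refine hv.isEPRVector hcomm hw hvN hwN ?_ ?_ ?_
  · simp [hvΦ, hwΦ, hE]
  · simp [hvΦ, hsvΦ, hwΦ, hswΦ, ← smul_add, hs]
  · simpa [hvΦ, hsvΦ] using (smul_right_injective H ht).ne hχ

end IsSquareZeroPartialIsometry

theorem dense_isEPRVector_of_tendsto (hcomm : ∀ x ∈ N₁, ∀ y ∈ N₂, Commute x y) {ι : Type*}
    {l : Filter ι} [l.NeBot] {v w : ι → H →L[𝕜] H}
    (hv : ∀ i, IsSquareZeroPartialIsometry (v i)) (hw : ∀ i, IsSquareZeroPartialIsometry (w i))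
    (hvN : ∀ i, v i ∈ N₁) (hwN : ∀ i, w i ∈ N₂)
    (hne : ∀ i, star (v i) * v i * (star (w i) * w i) ≠ 0)
    (hv0 : ∀ x, Tendsto (fun i => supportProjection (v i) x) l (𝓝 0))
    (hw0 : ∀ x, Tendsto (fun i => supportProjection (w i) x) l (𝓝 0)) :
    Dense {Ω | IsEPRVector N₁ N₂ Ω} := fun x =>
  isClosed_closure.mem_of_tendsto
    (tendsto_one_sub_mul_one_sub_apply
      (fun i => (hv i).isStarProjection_supportProjection) (hv0 x) (hw0 x))
    (.of_forall fun i => (hv i).mem_closure_isEPRVector hcomm (hw i) (hvN i) (hwN i) (hne i) x)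

end Pair

/-- Proper infiniteness of an algebra of operators, witnessed by mutually orthogonal projections
`E i` with strong sum `1` and partial isometries `V i` with initial projection `E i` and final
projection `E (i + 1)`. -/
def IsProperlyInfinite (N : NonUnitalStarSubalgebra 𝕜 (H →L[𝕜] H)) : Prop :=
  ∃ (E : ℕ → H →L[𝕜] H) (V : ℕ → H →L[𝕜] H),
    (∀ i, E i ∈ N) ∧ (∀ i, V i ∈ N) ∧
    (∀ i, IsIdempotentElem (E i) ∧ IsSelfAdjoint (E i)) ∧
    (∀ i j, i ≠ j → E i * E j = 0) ∧
    (∀ ξ : H, HasSum (fun i => (E i) ξ) ξ) ∧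
    (∀ i, star (V i) * V i = E i ∧ V i * star (V i) = E (i + 1))

theorem ne_zero_of_hasSum_of_star_mul_self [Nontrivial H] {E V : ℕ → H →L[𝕜] H}
    (hsum : ∀ ξ : H, HasSum (fun i => E i ξ) ξ)
    (hV : ∀ i, star (V i) * V i = E i ∧ V i * star (V i) = E (i + 1)) (n : ℕ) : E n ≠ 0 := by
  have hsucc (i : ℕ) : E (i + 1) = 0 ↔ E i = 0 := by
    rw [← (hV i).2, ← (hV i).1]
    exact (CStarRing.mul_star_self_eq_zero_iff _).trans (CStarRing.star_mul_self_eq_zero_iff _).symm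
  have hzero (i : ℕ) : E i = 0 ↔ E 0 = 0 := by
    induction i with
    | zero => rfl
    | succ i ih => rw [hsucc, ih]
  intro hn
  obtain ⟨x, hx⟩ := exists_ne (0 : H)
  refine hx ((hsum x).unique ?_)
  simp [fun i => (hzero i).2 ((hzero n).1 hn), hasSum_zero]

theorem IsProperlyInfinite.exists_tendsto_supportProjection [Nontrivial H]
    {N : NonUnitalStarSubalgebra 𝕜 (H →L[𝕜] H)} (hN : IsProperlyInfinite N) :
    ∃ v : ℕ → H →L[𝕜] H, (∀ i, IsSquareZeroPartialIsometry (v i)) ∧ (∀ i, v i ∈ N) ∧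
      (∀ i, star (v i) * v i ≠ 0) ∧
      ∀ x, Tendsto (fun i => supportProjection (v i) x) atTop (𝓝 0) := by
  obtain ⟨E, V, -, hVN, hE, hEE, hsum, hV⟩ := hN
  refine ⟨V, fun i => ?_, hVN, fun i => ?_, fun x => ?_⟩
  · apply isSquareZeroPartialIsometry_of_mul_eq_zero
    · rw [(hV i).1]
      exact (hE i).1
    · rw [(hV i).1, (hV i).2]
      exact hEE i (i + 1) (by simp)
  · rw [(hV i).1]
    exact ne_zero_of_hasSum_of_star_mul_self hsum hV i
  · have hlim : Tendsto (fun i => E i x) atTop (𝓝 0) := (hsum x).summable.tendsto_atTop_zero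
    simpa [supportProjection, hV] using hlim.add ((tendsto_add_atTop_iff_nat 1).2 hlim)

theorem IsProperlyInfinite.dense_isEPRVector [Nontrivial H]
    {N₁ N₂ : NonUnitalStarSubalgebra 𝕜 (H →L[𝕜] H)} (hcomm : ∀ x ∈ N₁, ∀ y ∈ N₂, Commute x y)
    (hN₁ : IsProperlyInfinite N₁) (hN₂ : IsProperlyInfinite N₂)
    (hSch : ∀ X₁ ∈ N₁, ∀ X₂ ∈ N₂, X₁ ≠ 0 → X₂ ≠ 0 → X₁ * X₂ ≠ 0) :
    Dense {Ω | IsEPRVector N₁ N₂ Ω} := by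
  obtain ⟨v, hv, hvN, hv_ne, hv0⟩ := hN₁.exists_tendsto_supportProjection
  obtain ⟨w, hw, hwN, hw_ne, hw0⟩ := hN₂.exists_tendsto_supportProjection
  refine dense_isEPRVector_of_tendsto hcomm hv hw hvN hwN (fun i => ?_) hv0 hw0
  exact hSch _ (mul_mem (star_mem (hvN i)) (hvN i)) _ (mul_mem (star_mem (hwN i)) (hwN i))
    (hv_ne i) (hw_ne i)

theorem stmt_16_general (N₁ N₂ : NonUnitalStarSubalgebra 𝕜 (H →L[𝕜] H))
    (hcomm : ∀ x ∈ N₁, ∀ y ∈ N₂, Commute x y)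
    (hN₁ : IsProperlyInfinite N₁) (hN₂ : IsProperlyInfinite N₂)
    (hSch : ∀ X₁ ∈ N₁, ∀ X₂ ∈ N₂, X₁ ≠ 0 → X₂ ≠ 0 → X₁ * X₂ ≠ 0)
    (Ψ : H) (hΨ : ‖Ψ‖ = 1) (ε : ℝ) (hε : 0 < ε) :
    ∃ Ψ' : H, ‖Ψ'‖ = 1 ∧ ‖Ψ - Ψ'‖ < ε ∧ IsEPRVector N₁ N₂ Ψ' := by
  have : Nontrivial H := nontrivial_of_ne Ψ 0 (norm_ne_zero_iff.mp (by simp [hΨ]))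
  have hdense := IsProperlyInfinite.dense_isEPRVector hcomm hN₁ hN₂ hSch
  obtain ⟨Ψ', hEPR, hnorm, hdist⟩ := exists_norm_eq_one_norm_sub_lt_of_mem_closure
    (S := {Ω | IsEPRVector N₁ N₂ Ω}) (fun _ hc _ hΩ => hΩ.smul hc) hΨ (hdense Ψ) hε
  exact ⟨Ψ', hnorm, hdist, hEPR⟩

end Hilbert

/-- Theorem 3 of the paper: For properly infinite von Neumann algebras
`N₁ ⊆ N₂'` with the Schlieder property, the vector states that are EPR states for
incommensurable pairs are norm dense among unit vectors. -/
theorem stmt_16 {H : Type*} [NormedAddCommGroup H] [InnerProductSpace ℂ H] [CompleteSpace H]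
    (N₁ N₂ : VonNeumannAlgebra H)
    (hNcomm : ∀ x ∈ N₁, ∀ y ∈ N₂, x * y = y * x)
    -- proper infiniteness of N₁ : a countable family of mutually orthogonal projections
    -- summing to 1, with shift partial isometries
    (hPI₁ : ∃ (E : ℕ → H →L[ℂ] H) (V : ℕ → H →L[ℂ] H),
      (∀ i, E i ∈ N₁) ∧ (∀ i, V i ∈ N₁) ∧
      (∀ i, IsIdempotentElem (E i) ∧ IsSelfAdjoint (E i)) ∧
      (∀ i j, i ≠ j → E i * E j = 0) ∧
      (∀ ξ : H, HasSum (fun i => (E i) ξ) ξ) ∧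
      (∀ i, star (V i) * V i = E i ∧ V i * star (V i) = E (i + 1)))
    (hPI₂ : ∃ (E : ℕ → H →L[ℂ] H) (V : ℕ → H →L[ℂ] H),
      (∀ i, E i ∈ N₂) ∧ (∀ i, V i ∈ N₂) ∧
      (∀ i, IsIdempotentElem (E i) ∧ IsSelfAdjoint (E i)) ∧
      (∀ i j, i ≠ j → E i * E j = 0) ∧
      (∀ ξ : H, HasSum (fun i => (E i) ξ) ξ) ∧
      (∀ i, star (V i) * V i = E i ∧ V i * star (V i) = E (i + 1)))
    -- Schlieder property
    (hSch : ∀ X₁ ∈ N₁, ∀ X₂ ∈ N₂, X₁ ≠ 0 → X₂ ≠ 0 → X₁ * X₂ ≠ 0) :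
    ∀ (Ψ : H), ‖Ψ‖ = 1 → ∀ ε : ℝ, 0 < ε →
      ∃ Ψ' : H, ‖Ψ'‖ = 1 ∧ ‖Ψ - Ψ'‖ < ε ∧
        ∃ E₁ ∈ N₁, ∃ F₁ ∈ N₁, ∃ E₂ ∈ N₂, ∃ F₂ ∈ N₂,
          (IsIdempotentElem E₁ ∧ IsSelfAdjoint E₁) ∧
          (IsIdempotentElem F₁ ∧ IsSelfAdjoint F₁) ∧
          (IsIdempotentElem E₂ ∧ IsSelfAdjoint E₂) ∧
          (IsIdempotentElem F₂ ∧ IsSelfAdjoint F₂) ∧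
          inner (𝕜 := ℂ) Ψ' (((E₁ - E₂) * (E₁ - E₂)) Ψ') = 0 ∧
          inner (𝕜 := ℂ) Ψ' (((F₁ - F₂) * (F₁ - F₂)) Ψ') = 0 ∧
          inner (𝕜 := ℂ) Ψ' ((star (E₁ * F₁ - F₁ * E₁) * (E₁ * F₁ - F₁ * E₁)) Ψ') ≠ 0 ∧
          inner (𝕜 := ℂ) Ψ' ((star (E₂ * F₂ - F₂ * E₂) * (E₂ * F₂ - F₂ * E₂)) Ψ') ≠ 0 := by
  exact stmt_16_general N₁.toNonUnitalStarSubalgebra N₂.toNonUnitalStarSubalgebra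
    hNcomm hPI₁ hPI₂ hSch
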